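/- Let G be a graph, C a circuit in G such that every edge of C is contained in a thread of G of length at least q. If the contracted graph G/C admits a nowhere-zero Z2×Z2-flow, then G admits a Z2×Z2-flow f such that E(G) − E(C) ⊆ supp(f) and |E_{f=(0,0)}(C)| ≤ (1/4)(|E(C)| − q). -/

import Mathlib

/-- A finite multigraph: loops and multiple edges are allowed.  Each edge is
assigned its (unordered) pair of endpoints. -/
structure Multigraph where
  V : Type
  E : Type
  finV : Finite V
  finE : Finite E
  ends : E → Sym2 V

attribute [instance] Multigraph.finV Multigraph.finE

namespace Multigraph

/-- A walk of length `n`: a sequence of `n+1` vertices and `n` edges, each edge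
joining consecutive vertices. -/
structure Walk (G : Multigraph) (n : ℕ) where
  vtx : Fin (n + 1) → G.V
  edge : Fin n → G.E
  compat : ∀ i : Fin n, G.ends (edge i) = s(vtx i.castSucc, vtx i.succ)

variable (G : Multigraph)

/-- The degree of a vertex (a loop counts twice). -/
noncomputable def degree (v : G.V) : ℕ :=
  Nat.card {e : G.E // v ∈ G.ends e ∧ ¬ (G.ends e).IsDiag} +
    2 * Nat.card {e : G.E // G.ends e = s(v, v)}

/-- The degree of a vertex in the subgraph with edge set `S` (a loop counts twice). -/
noncomputable def degIn (S : Set G.E) (v : G.V) : ℕ :=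
  Nat.card {e : G.E // e ∈ S ∧ v ∈ G.ends e ∧ ¬ (G.ends e).IsDiag} +
    2 * Nat.card {e : G.E // e ∈ S ∧ G.ends e = s(v, v)}

/-- A cycle (identified with its edge set): every vertex has even degree. -/
def IsCycle (S : Set G.E) : Prop := ∀ v : G.V, Even (G.degIn S v)

/-- `u` is joined to `w` by a path using only edges in `S`. -/
def Reaches (S : Set G.E) (u w : G.V) : Prop :=
  Relation.ReflTransGen (fun a b => ∃ e ∈ S, G.ends e = s(a, b)) u w

/-- A circuit (identified with its edge set): a connected `2`-regular subgraph. -/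
def IsCircuit (S : Set G.E) : Prop :=
  S.Nonempty ∧
    (∀ v : G.V, (∃ e ∈ S, v ∈ G.ends e) → G.degIn S v = 2) ∧
    ∀ u w : G.V, (∃ e ∈ S, u ∈ G.ends e) → (∃ e ∈ S, w ∈ G.ends e) → G.Reaches S u w

/-- A `ℤ₂×ℤ₂`-flow: at every vertex the values on the incident edges sum to zero
(a loop contributes its value twice, hence zero). -/
def IsFlow (f : G.E → ZMod 2 × ZMod 2) : Prop :=
  ∀ v : G.V, ∑ᶠ e ∈ {e : G.E | v ∈ G.ends e ∧ ¬ (G.ends e).IsDiag}, f e = 0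

/-- The support of a flow. -/
def supp (f : G.E → ZMod 2 × ZMod 2) : Set G.E := {e | f e ≠ 0}

/-- Contraction of the edge set `C`: delete the edges of `C` and identify the
ends of each edge of `C`. -/
def contract (C : Set G.E) : Multigraph where
  V := Quot fun u w : G.V => ∃ e ∈ C, G.ends e = s(u, w)
  E := {e : G.E // e ∉ C}
  finV := Finite.of_surjective _ (Quot.mk_surjective)
  finE := inferInstance
  ends := fun e => (G.ends e.1).map (Quot.mk _)

/-- A path: all vertices distinct (hence all edges distinct, which we also require). -/
def Walk.IsPath {n : ℕ} (W : G.Walk n) : Prop :=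
  Function.Injective W.vtx ∧ Function.Injective W.edge

/-- A nontrivial path all of whose internal vertices have degree `2` in `G`. -/
def IsDeg2Path {n : ℕ} (W : G.Walk n) : Prop :=
  1 ≤ n ∧ W.IsPath G ∧ ∀ i : Fin (n + 1), 0 < i.val → i.val < n → G.degree (W.vtx i) = 2

/-- A thread of `G`: a maximal path all of whose internal vertices have degree `2`
in `G` (maximal: its edge set is not properly contained in the edge set of
another such path). -/
def IsThread {n : ℕ} (W : G.Walk n) : Prop :=
  G.IsDeg2Path W ∧ ∀ (m : ℕ) (Q : G.Walk m), G.IsDeg2Path Q →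
    Set.range W.edge ⊆ Set.range Q.edge → Set.range Q.edge = Set.range W.edge

/-- A cycle cover: a (multi)collection of cycles covering every edge. -/
def IsCycleCover (𝒞 : Multiset (Set G.E)) : Prop :=
  (∀ S ∈ 𝒞, G.IsCycle S) ∧ ∀ e : G.E, ∃ S ∈ 𝒞, e ∈ S

/-- The length of a cycle cover: the sum of the lengths of its cycles. -/
noncomputable def coverLength (𝒞 : Multiset (Set G.E)) : ℕ :=
  (𝒞.map Set.ncard).sum

/-- The minimum length of a cycle cover of `G`. -/
noncomputable def cc : ℕ :=
  sInf {L : ℕ | ∃ 𝒞 : Multiset (Set G.E), G.IsCycleCover 𝒞 ∧ G.coverLength 𝒞 = L}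

/-- `G` is bridgeless: the ends of each edge `e` are still joined after deleting `e`. -/
def Bridgeless : Prop :=
  ∀ (e : G.E) (u w : G.V), G.ends e = s(u, w) → G.Reaches {e}ᶜ u w

/-- The connected component of the subgraph with edge set `S` containing the edge `e₀`. -/
def component (S : Set G.E) (e₀ : G.E) : Set G.E :=
  {e ∈ S | ∃ u w : G.V, u ∈ G.ends e₀ ∧ w ∈ G.ends e ∧ G.Reaches S u w}

/-- `B` is a connected component of the subgraph with edge set `S`. -/
def IsComponent (S B : Set G.E) : Prop := ∃ e₀ ∈ S, B = G.component S e₀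

/-- A `k`-flow: an orientation `D` (given by the tail/head pair of each edge)
together with an integer-valued function `f` with `|f e| < k`, conserved at
every vertex. -/
def IsIntFlow (k : ℕ) (D : G.E → G.V × G.V) (f : G.E → ℤ) : Prop :=
  (∀ e : G.E, s((D e).1, (D e).2) = G.ends e) ∧
    (∀ e : G.E, |f e| < (k : ℤ)) ∧
    ∀ v : G.V, (∑ᶠ e ∈ {e : G.E | (D e).1 = v}, f e) =
      ∑ᶠ e ∈ {e : G.E | (D e).2 = v}, f e

end Multigraph

/-!
A nowhere-zero flow of `G/C` lifts to a flow of `G` that vanishes only on `C`; call such flows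
admissible. Adding a constant on `C` preserves admissibility, so if no admissible flow satisfies
the bound, then each value occurs on `C` more than `(|C| - q)/4` times. Hence the numbers of
edges of `C` on which two admissible flows take two given values differ by less than `q`.

The defect of `f` at a vertex is the sum of `f` over the incident edges outside `C`. For
`c ≠ 0`, each vertex whose defect is neither `0` nor `c` is linked to another one outside `C` by
edges with values other than `0` and `c`. A link, closed up along `C`, supports a binary flow
`Q` such that `f + c Q` is again admissible. If the supports of two such `Q` and `R` meet `C` in
a set on which `f` is constant, then comparing `f`, `f + c Q`, `f + c R` and `f + c (Q + R)`
shows that this set has fewer than `q` edges. On the other hand, an arc of `C` between two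
vertices of nonzero defect has at least `q` edges, because these vertices do not have degree
two.

Consequently no link joins two vertices on a stretch of `C` along which no defect is equal to
`c`. Adding `c` along links for suitable `c`, all defects can therefore be made `0` or a fixed
`a`; taking then `c ≠ 0, a` they are all `0`. The resulting flow is constant on `C`, which
contradicts the equidistribution of its values.
-/

namespace Multigraph

variable {G : Multigraph}

noncomputable instance : Fintype G.V := Fintype.ofFinite _

noncomputable instance : Fintype G.E := Fintype.ofFinite _

noncomputable instance : DecidableEq G.V := Classical.decEq _

noncomputable instance : DecidableEq G.E := Classical.decEq _

section Boundary

variable {A B : Type*} [AddCommGroup A] [Module (ZMod 2) A] [AddCommGroup B] [Module (ZMod 2) B]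

/-- The incidence vector of an edge modulo 2: the sum of its two ends, hence zero for a loop. -/
noncomputable def inc (e : G.E) : G.V → ZMod 2 :=
  Sym2.lift ⟨fun u w => Pi.single u 1 + Pi.single w 1, fun _ _ => add_comm _ _⟩ (G.ends e)

theorem inc_of_ends {e : G.E} {u w : G.V} (h : G.ends e = s(u, w)) :
    inc e = Pi.single u 1 + Pi.single w 1 := by
  rw [inc, h, Sym2.lift_mk]

theorem exists_ends_eq (e : G.E) : ∃ u w, G.ends e = s(u, w) :=
  ⟨_, _, (Quot.out_eq (G.ends e)).symm⟩

theorem inc_apply (e : G.E) (v : G.V) :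
    inc e v = if v ∈ G.ends e ∧ ¬ (G.ends e).IsDiag then 1 else 0 := by
  obtain ⟨u, w, h⟩ := exists_ends_eq e
  simp only [inc_of_ends h, h, Sym2.mem_iff, Sym2.mk_isDiag_iff, Pi.add_apply, Pi.single_apply]
  have := ZModModule.add_self (1 : ZMod 2)
  grind

/-- The boundary of an edge function with values in a vector space over `ZMod 2`: at each vertex,
the sum of the values on the incident non-loop edges.  Its kernel consists of the flows. -/
noncomputable def boundary : (G.E → A) →ₗ[ZMod 2] (G.V → A) where
  toFun f v := ∑ e, inc e v • f e
  map_add' f g := by ext v; simp only [Pi.add_apply, smul_add, Finset.sum_add_distrib]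
  map_smul' r f := by
    ext v
    simp only [Pi.smul_apply, Finset.smul_sum, smul_comm r, RingHom.id_apply]

theorem boundary_apply (f : G.E → A) (v : G.V) : boundary f v = ∑ e, inc e v • f e := rfl

theorem boundary_map (φ : A →ₗ[ZMod 2] B) (f : G.E → A) (v : G.V) :
    boundary (fun e => φ (f e)) v = φ (boundary f v) := by
  simp only [boundary_apply, map_sum, map_smul]

theorem boundary_smul_const (P : G.E → ZMod 2) (c : A) (v : G.V) :
    boundary (fun e => P e • c) v = boundary P v • c :=
  boundary_map (LinearMap.toSpanSingleton (ZMod 2) A c) P v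

theorem boundary_single {e : G.E} {u w : G.V} (h : G.ends e = s(u, w)) :
    boundary (Pi.single e (1 : ZMod 2)) = Pi.single u 1 + Pi.single w 1 := by
  ext v
  simp only [boundary_apply, smul_eq_mul, Pi.single_apply, mul_ite, mul_one, mul_zero,
    Finset.sum_ite_eq', Finset.mem_univ, if_true, inc_of_ends h]

theorem exists_mem_ends_of_boundary_ne_zero {f : G.E → A} {v : G.V} (h : boundary f v ≠ 0) :
    ∃ e, f e ≠ 0 ∧ v ∈ G.ends e := by
  obtain ⟨e, -, he⟩ := Finset.exists_ne_zero_of_sum_ne_zero h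
  refine ⟨e, right_ne_zero_of_smul he, ?_⟩
  by_contra hv
  exact left_ne_zero_of_smul he (by rw [inc_apply, if_neg fun h => hv h.1])

theorem isFlow_iff_boundary_eq_zero {f : G.E → ZMod 2 × ZMod 2} :
    G.IsFlow f ↔ boundary f = 0 := by
  rw [funext_iff]
  refine forall_congr' fun v => ?_
  rw [Pi.zero_apply, boundary_apply, finsum_mem_eq_toFinset_sum, Set.toFinset_ofPred,
    Finset.sum_filter]
  simp only [inc_apply, ite_smul, one_smul, zero_smul]

end Boundary

section Reaches

variable {A : Type*} [AddCommGroup A] [Module (ZMod 2) A] {S C : Set G.E} {u w : G.V}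

instance (S : Set G.E) : Std.Symm fun u w : G.V => ∃ e ∈ S, G.ends e = s(u, w) :=
  ⟨fun _ _ => Exists.imp fun _ he => ⟨he.1, he.2.trans Sym2.eq_swap⟩⟩

theorem Reaches.symm (h : G.Reaches S u w) : G.Reaches S w u :=
  Relation.ReflTransGen.stdSymm.symm _ _ h

theorem Reaches.exists_boundary_eq (h : G.Reaches S u w) :
    ∃ P : G.E → ZMod 2, Function.support P ⊆ S ∧ boundary P = Pi.single u 1 + Pi.single w 1 := by
  induction h with
  | refl => exact ⟨0, by simp, by rw [map_zero, ZModModule.add_self]⟩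
  | @tail b d _ hbd ih =>
    obtain ⟨P, hPS, hP⟩ := ih
    obtain ⟨e, he, hends⟩ := hbd
    refine ⟨P + Pi.single e 1, fun x hx => ?_, ?_⟩
    · by_cases hxe : x = e
      · exact hxe ▸ he
      · exact hPS (by simpa [hxe] using hx)
    · rw [map_add, hP, boundary_single hends, ZModModule.add_add_add_cancel]

/-- The vertex of `G.contract C` obtained from the vertex `v` of `G`. -/
def contractMk (C : Set G.E) (v : G.V) : (G.contract C).V := Quot.mk _ v

theorem contractMk_eq_iff_reaches : contractMk C u = contractMk C w ↔ G.Reaches C u w :=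
  Quot.eq.trans (by rw [Relation.EqvGen.eqvGen_eq_reflTransGen, Reaches])

theorem sum_boundary_fiber (C : Set G.E) (f : G.E → A) (K : (G.contract C).V) :
    ∑ v with contractMk C v = K, boundary f v =
      boundary (fun e : (G.contract C).E => f e.1) K := by
  have hinc : ∀ (e : G.E) (u w : G.V), G.ends e = s(u, w) →
      ∑ v with contractMk C v = K, inc e v =
        (Pi.single (contractMk C u) 1 + Pi.single (contractMk C w) 1 :
          (G.contract C).V → ZMod 2) K := fun e u w h => by
    simp only [inc_of_ends h, Pi.add_apply, Finset.sum_add_distrib, Pi.single_apply,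
      Finset.sum_ite_eq', Finset.mem_filter, Finset.mem_univ, true_and, eq_comm (a := K)]
  simp only [boundary_apply]
  rw [Finset.sum_comm]
  simp only [← Finset.sum_smul]
  symm
  refine Fintype.sum_of_injective (ι := (G.contract C).E) Subtype.val Subtype.val_injective _ _
    (fun e he => ?_) fun e => ?_
  · obtain ⟨u, w, h⟩ := exists_ends_eq e
    have heC : e ∈ C := of_not_not fun heC => he ⟨⟨e, heC⟩, rfl⟩
    have huw : contractMk C u = contractMk C w := Quot.sound ⟨e, heC, h⟩
    rw [hinc _ _ _ h, huw, ZModModule.add_self, Pi.zero_apply, zero_smul]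
  · obtain ⟨u, w, h⟩ := exists_ends_eq e.1
    have hends : (G.contract C).ends e = s(contractMk C u, contractMk C w) :=
      congrArg (Sym2.map (contractMk C)) h
    rw [hinc _ _ _ h, inc_of_ends hends, Pi.add_apply]

theorem exists_reaches_boundary_ne_zero {f : G.E → A} (hu : boundary f u ≠ 0) :
    ∃ w, w ≠ u ∧ boundary f w ≠ 0 ∧ G.Reaches (Function.support f) u w := by
  by_contra! hcon
  have hsum := sum_boundary_fiber (Function.support f) f (contractMk _ u)
  have hzero : (fun e : (G.contract (Function.support f)).E => f e.1) = 0 :=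
    funext fun e => Function.notMem_support.1 e.2
  rw [hzero, map_zero, Pi.zero_apply, Finset.sum_eq_single_of_mem u (by simp)] at hsum
  · exact hu hsum
  · intro w hw hwu
    by_contra h
    exact hcon w hwu h (contractMk_eq_iff_reaches.1 (Finset.mem_filter.1 hw).2).symm

theorem exists_boundary_eq_of_sum_fiber_eq_zero {δ : G.V → A}
    (hδ : ∀ K, ∑ v with contractMk C v = K, δ v = 0) :
    ∃ f : G.E → A, Function.support f ⊆ C ∧ boundary f = δ := by
  let root (v : G.V) : G.V := (contractMk C v).out
  have hroot : ∀ v, contractMk C (root v) = contractMk C v := fun v => Quot.out_eq _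
  choose P hPC hP using fun v =>
    (contractMk_eq_iff_reaches.1 (hroot v).symm).exists_boundary_eq
  refine ⟨∑ v, fun e => P v e • δ v, fun e he => ?_, funext fun x => ?_⟩
  · by_contra heC
    refine he ?_
    have hzero : ∀ v, P v e = 0 := fun v => by
      by_contra h
      exact heC (hPC v h)
    simp only [Finset.sum_apply, hzero, zero_smul, Finset.sum_const_zero]
  · have hfiber : ∑ v with root v = x, δ v = 0 := by
      by_cases hx : root x = x
      · rw [← hδ (contractMk C x)]
        refine Finset.sum_congr (Finset.filter_congr fun v _ => ⟨?_, fun h => ?_⟩) fun _ _ => rfl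
        · rintro rfl
          exact (hroot v).symm
        · rw [← hx]
          exact congrArg Quot.out h
      · refine Finset.sum_eq_zero fun v hv => absurd ?_ hx
        rw [← (Finset.mem_filter.1 hv).2]
        exact congrArg Quot.out (hroot v)
    simp only [map_sum, Finset.sum_apply, boundary_smul_const, hP, Pi.add_apply, add_smul,
      Finset.sum_add_distrib, Pi.single_apply, ite_smul, one_smul, zero_smul,
      Finset.sum_ite_eq, Finset.mem_univ, if_true]
    rw [← Finset.sum_filter]
    simp only [eq_comm (a := x), hfiber, add_zero]

theorem IsFlow.exists_lift {f' : (G.contract C).E → ZMod 2 × ZMod 2}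
    (hf' : (G.contract C).IsFlow f') :
    ∃ f : G.E → ZMod 2 × ZMod 2, G.IsFlow f ∧ ∀ e : (G.contract C).E, f e.1 = f' e := by
  classical
  let g : G.E → ZMod 2 × ZMod 2 := fun e => if h : e ∉ C then f' ⟨e, h⟩ else 0
  have hg : (fun e : (G.contract C).E => g e.1) = f' := funext fun e => dif_pos e.2
  obtain ⟨p, hpC, hp⟩ := exists_boundary_eq_of_sum_fiber_eq_zero (δ := boundary g) fun K => by
    rw [sum_boundary_fiber, hg, isFlow_iff_boundary_eq_zero.1 hf', Pi.zero_apply]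
  refine ⟨g + p, isFlow_iff_boundary_eq_zero.2 ?_, fun e => ?_⟩
  · rw [map_add, hp, ZModModule.add_self]
  · have hpe : p e.1 = 0 := by
      by_contra h
      exact e.2 (hpC h)
    rw [Pi.add_apply, hpe, add_zero]
    exact congrFun hg e

end Reaches

section Degree

variable {S T C : Set G.E} {v : G.V} {e : G.E}

theorem degree_eq_degIn_univ : G.degree v = G.degIn Set.univ v := by
  simp only [degree, degIn, Set.mem_univ, true_and]

theorem degIn_union (h : Disjoint S T) : G.degIn (S ∪ T) v = G.degIn S v + G.degIn T v := by
  have card_add (p : G.E → Prop) : Nat.card {e // e ∈ S ∪ T ∧ p e} =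
      Nat.card {e // e ∈ S ∧ p e} + Nat.card {e // e ∈ T ∧ p e} := by
    have hdisj : Disjoint {e | e ∈ S ∧ p e} {e | e ∈ T ∧ p e} :=
      h.mono (fun _ he => he.1) fun _ he => he.1
    refine (congrArg Set.ncard (Set.ext fun e => ?_)).trans (Set.ncard_union_eq hdisj)
    exact or_and_right
  rw [degIn, card_add, card_add, degIn, degIn]
  ring

theorem degIn_eq_zero_iff : G.degIn S v = 0 ↔ ∀ e ∈ S, v ∉ G.ends e := by
  rw [degIn, Nat.add_eq_zero_iff, Nat.mul_eq_zero, or_iff_right two_ne_zero,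
    Finite.card_eq_zero_iff, Finite.card_eq_zero_iff, isEmpty_subtype, isEmpty_subtype]
  refine ⟨fun h e he hv => ?_, fun h => ⟨fun e he => h e he.1 he.2.1, fun e he => h e he.1 ?_⟩⟩
  · by_cases hd : (G.ends e).IsDiag
    · obtain ⟨u, w, huw⟩ := exists_ends_eq e
      obtain rfl : u = w := by rwa [huw, Sym2.mk_isDiag_iff] at hd
      obtain rfl : v = u := by rwa [huw, Sym2.mem_iff, or_self] at hv
      exact h.2 e ⟨he, huw⟩
    · exact h.1 e ⟨he, hv, hd⟩
  · rw [he.2]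
    exact Sym2.mem_mk_left v v

theorem boundary_indicator_one (S : Set G.E) (v : G.V) :
    boundary (S.indicator (1 : G.E → ZMod 2)) v = G.degIn S v := by
  classical
  rw [degIn, Nat.cast_add, Nat.cast_mul, Nat.cast_two, show (2 : ZMod 2) = 0 from rfl, zero_mul,
    add_zero, Nat.card_eq_fintype_card, Fintype.card_subtype, ← Finset.sum_boole, boundary_apply]
  refine Finset.sum_congr rfl fun e _ => ?_
  simp only [inc_apply, Set.indicator_apply, smul_eq_mul, Pi.one_apply]
  grind

theorem isCycle_iff_boundary_eq_zero :
    G.IsCycle S ↔ boundary (S.indicator (1 : G.E → ZMod 2)) = 0 := by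
  simp only [IsCycle, funext_iff, boundary_indicator_one, Pi.zero_apply,
    ZMod.natCast_eq_zero_iff_even]

theorem IsCircuit.isCycle (hC : G.IsCircuit C) : G.IsCycle C := fun v => by
  by_cases hv : ∃ e ∈ C, v ∈ G.ends e
  · exact hC.2.1 v hv ▸ even_two
  · push Not at hv
    exact degIn_eq_zero_iff.2 hv ▸ Even.zero

theorem IsCycle.two_le_degIn (hS : G.IsCycle S) (he : e ∈ S) (hv : v ∈ G.ends e) :
    2 ≤ G.degIn S v := by
  have hpos : G.degIn S v ≠ 0 := fun h => degIn_eq_zero_iff.1 h e he hv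
  obtain ⟨k, hk⟩ := hS v
  omega

theorem IsCycle.sdiff (hS : G.IsCycle S) (hT : G.IsCycle T) (h : T ⊆ S) : G.IsCycle (S \ T) := by
  rw [isCycle_iff_boundary_eq_zero] at *
  rw [Set.indicator_sdiff h, map_sub, hS, hT, sub_zero]

/-- Edges of `T` and of `C \ T` cannot meet, as the degree at a common vertex would be at least
four. -/
theorem IsCircuit.eq_of_isCycle_subset (hC : G.IsCircuit C) (hT : G.IsCycle T) (hTC : T ⊆ C)
    (hne : T.Nonempty) : T = C := by
  have hmem : ∀ {e e' v}, e ∈ T → v ∈ G.ends e → e' ∈ C → v ∈ G.ends e' → e' ∈ T := by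
    intro e e' v he hv he' hv'
    by_contra heT
    have hsum := degIn_union (v := v) (disjoint_sdiff_self_right (x := T) (y := C))
    have hdegT := hT.two_le_degIn he hv
    have hdegC := (hC.isCycle.sdiff hT hTC).two_le_degIn (e := e') ⟨he', heT⟩ hv'
    rw [Set.union_sdiff_cancel hTC, hC.2.1 v ⟨e', he', hv'⟩] at hsum
    omega
  obtain ⟨e, he⟩ := hne
  obtain ⟨u, u', hu⟩ := exists_ends_eq e
  have heu : u ∈ G.ends e := hu ▸ Sym2.mem_mk_left u u'
  have hreach : ∀ {w}, G.Reaches C u w → ∃ d ∈ T, w ∈ G.ends d := fun h => by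
    induction h with
    | refl => exact ⟨e, he, heu⟩
    | @tail b w _ hbw ih =>
      obtain ⟨d, hd, hbd⟩ := ih
      obtain ⟨d', hd', hends⟩ := hbw
      exact ⟨d', hmem hd hbd hd' (hends ▸ Sym2.mem_mk_left b w), hends ▸ Sym2.mem_mk_right b w⟩
  refine hTC.antisymm fun e' he' => ?_
  obtain ⟨w, w', hw⟩ := exists_ends_eq e'
  have hw' : w ∈ G.ends e' := hw ▸ Sym2.mem_mk_left w w'
  obtain ⟨d, hd, hwd⟩ := hreach (hC.2.2 u w ⟨e, hTC he, heu⟩ ⟨e', he', hw'⟩)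
  exact hmem hd hwd he' hw'

/-- A set of edges is saturated at degree-two vertices if, at every vertex of degree two, it
contains both or none of the two incident edges; so it contains or avoids all edges of a path
with internal vertices of degree two. -/
def SaturatedAtDegreeTwo (S : Set G.E) : Prop :=
  ∀ ⦃v : G.V⦄ ⦃e e' : G.E⦄, G.degree v = 2 → e ∈ S → v ∈ G.ends e → v ∈ G.ends e' → e' ∈ S

theorem IsCycle.saturatedAtDegreeTwo (hS : G.IsCycle S) : SaturatedAtDegreeTwo S := by
  intro v e e' hv he hve hve'
  have hsum := degIn_union (v := v) (disjoint_compl_right (a := S))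
  rw [Set.union_compl_self, ← degree_eq_degIn_univ, hv] at hsum
  have hcompl : G.degIn Sᶜ v = 0 := by
    have := hS.two_le_degIn he hve
    omega
  exact of_not_not fun h => degIn_eq_zero_iff.1 hcompl e' h hve'

end Degree

/-- An enumeration of `C` in cyclic order: the edge `edge k` joins `vtx k` to `vtx (k + 1)` for
`k < n`, and `edge n` joins `vtx n` to `vtx 0`.  The values beyond `n` are irrelevant; `n = 0` is a
loop. -/
structure Tour (G : Multigraph) (C : Set G.E) (n : ℕ) where
  vtx : ℕ → G.V
  edge : ℕ → G.E
  ends_edge : ∀ k < n, G.ends (edge k) = s(vtx k, vtx (k + 1))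
  ends_last : G.ends (edge n) = s(vtx n, vtx 0)
  vtx_injOn : Set.InjOn vtx (Set.Iic n)
  edge_injOn : Set.InjOn edge (Set.Iic n)
  image_edge : edge '' Set.Iic n = C

namespace Tour

variable {C : Set G.E} {n i j k l p : ℕ} (τ : G.Tour C n)

theorem edge_mem (hp : p ≤ n) : τ.edge p ∈ C :=
  τ.image_edge.subset (Set.mem_image_of_mem _ hp)

theorem exists_edge_eq {e : G.E} (he : e ∈ C) : ∃ p ≤ n, τ.edge p = e := by
  rwa [← τ.image_edge] at he

theorem mem_ends_edge_iff (hl : 0 < l) (hln : l ≤ n) (hp : p ≤ n) :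
    τ.vtx l ∈ G.ends (τ.edge p) ↔ p = l ∨ p + 1 = l := by
  have vtx_eq_iff {m} (hm : m ≤ n) : τ.vtx l = τ.vtx m ↔ l = m := τ.vtx_injOn.eq_iff hln hm
  rcases hp.lt_or_eq with hp | rfl
  · rw [τ.ends_edge p hp, Sym2.mem_iff, vtx_eq_iff hp.le, vtx_eq_iff hp]
    omega
  · rw [τ.ends_last, Sym2.mem_iff, vtx_eq_iff le_rfl, vtx_eq_iff (Nat.zero_le _)]
    omega

theorem exists_vtx_eq {e : G.E} {v : G.V} (he : e ∈ C) (hv : v ∈ G.ends e) :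
    ∃ l ≤ n, τ.vtx l = v := by
  obtain ⟨p, hp, rfl⟩ := τ.exists_edge_eq he
  rcases hp.lt_or_eq with hp | rfl
  · rw [τ.ends_edge p hp, Sym2.mem_iff] at hv
    exact hv.elim (fun h => ⟨p, hp.le, h.symm⟩) fun h => ⟨p + 1, hp, h.symm⟩
  · rw [τ.ends_last, Sym2.mem_iff] at hv
    exact hv.elim (fun h => ⟨p, le_rfl, h.symm⟩) fun h => ⟨0, Nat.zero_le _, h.symm⟩

/-- The edges of the tour from `vtx i` to `vtx j`. -/
def arc (i j : ℕ) : Set G.E := τ.edge '' Set.Ico i j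

theorem edge_mem_arc_iff (hj : j ≤ n + 1) (hp : p ≤ n) : τ.edge p ∈ τ.arc i j ↔ i ≤ p ∧ p < j := by
  have hsub : Set.Ico i j ⊆ Set.Iic n := fun m hm => Nat.lt_succ_iff.1 (hm.2.trans_le hj)
  exact τ.edge_injOn.mem_image_iff hsub hp

theorem arc_subset (hj : j ≤ n + 1) : τ.arc i j ⊆ C :=
  Set.image_subset_iff.2 fun _ hm => τ.edge_mem (Nat.lt_succ_iff.1 (hm.2.trans_le hj))

theorem arc_zero_succ : τ.arc 0 (n + 1) = C := by
  refine Eq.trans ?_ τ.image_edge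
  exact congrArg _ (Set.ext fun m => by simp only [Set.mem_Ico, Set.mem_Iic]; omega)

theorem ncard_arc (hj : j ≤ n + 1) : (τ.arc i j).ncard = j - i := by
  have hsub : Set.Ico i j ⊆ Set.Iic n := fun m hm => Nat.lt_succ_iff.1 (hm.2.trans_le hj)
  rw [arc, (τ.edge_injOn.mono hsub).ncard_image, ← Finset.coe_Ico,
    Set.ncard_coe_finset, Nat.card_Ico]

theorem indicator_arc_succ (hij : i ≤ j) (hj : j ≤ n) :
    (τ.arc i (j + 1)).indicator (1 : G.E → ZMod 2) =
      (τ.arc i j).indicator 1 + Pi.single (τ.edge j) 1 := by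
  have hset : τ.arc i (j + 1) = τ.arc i j ∪ {τ.edge j} := by
    rw [arc, arc, ← Set.image_singleton, ← Set.image_union]
    exact congrArg _ (Set.ext fun m => by
      simp only [Set.mem_Ico, Set.mem_union, Set.mem_singleton_iff]; omega)
  have hdisj : Disjoint (τ.arc i j) {τ.edge j} := by
    rw [Set.disjoint_singleton_right, τ.edge_mem_arc_iff (by omega) hj]
    omega
  rw [hset, Set.indicator_union_of_disjoint hdisj, Set.indicator_singleton]
  rfl

theorem boundary_arc (hij : i ≤ j) (hj : j ≤ n) :
    boundary ((τ.arc i j).indicator (1 : G.E → ZMod 2)) =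
      Pi.single (τ.vtx i) 1 + Pi.single (τ.vtx j) 1 := by
  induction j, hij using Nat.le_induction with
  | base =>
    rw [arc, Set.Ico_self, Set.image_empty, Set.indicator_empty, ZModModule.add_self]
    exact map_zero boundary
  | succ j hij ih =>
    rw [τ.indicator_arc_succ hij (by omega), map_add, ih (by omega),
      boundary_single (τ.ends_edge j hj), ZModModule.add_add_add_cancel]

theorem isCycle (τ : G.Tour C n) : G.IsCycle C := by
  rw [isCycle_iff_boundary_eq_zero, ← τ.arc_zero_succ, τ.indicator_arc_succ (Nat.zero_le n) le_rfl,
    map_add, τ.boundary_arc (Nat.zero_le n) le_rfl, boundary_single τ.ends_last,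
    ZModModule.add_add_add_cancel, ZModModule.add_self]

variable {A : Type*} [AddCommGroup A] [Module (ZMod 2) A]

theorem inc_edge_vtx (hl : 0 < l) (hln : l ≤ n) (hp : p ≤ n) (hpl : p = l ∨ p + 1 = l) :
    inc (τ.edge p) (τ.vtx l) = 1 := by
  have hmem := (τ.mem_ends_edge_iff hl hln hp).2 hpl
  have vtx_ne {m m' : ℕ} (hm : m ≤ n) (hm' : m' ≤ n) (h : m ≠ m') : τ.vtx m ≠ τ.vtx m' :=
    fun hv => h (τ.vtx_injOn hm hm' hv)
  suffices h : ¬ (G.ends (τ.edge p)).IsDiag by rw [inc_apply, if_pos ⟨hmem, h⟩]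
  rcases hp.lt_or_eq with hp' | rfl
  · rw [τ.ends_edge p hp', Sym2.mk_isDiag_iff]
    exact vtx_ne hp hp' p.lt_succ_self.ne
  · rw [τ.ends_last, Sym2.mk_isDiag_iff]
    exact vtx_ne le_rfl (Nat.zero_le _) (by omega)

theorem boundary_indicator_vtx_succ (f : G.E → A) (hl : l < n) :
    boundary (C.indicator f) (τ.vtx (l + 1)) = f (τ.edge l) + f (τ.edge (l + 1)) := by
  have hne : τ.edge l ≠ τ.edge (l + 1) := fun h => absurd (τ.edge_injOn hl.le hl h) (by omega)
  have hterm {p : ℕ} (hp : p ≤ n) (hpl : p = l + 1 ∨ p + 1 = l + 1) :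
      inc (τ.edge p) (τ.vtx (l + 1)) • C.indicator f (τ.edge p) = f (τ.edge p) := by
    rw [τ.inc_edge_vtx l.succ_pos hl hp hpl, one_smul, Set.indicator_of_mem (τ.edge_mem hp)]
  rw [boundary_apply, Fintype.sum_eq_add _ _ hne, hterm hl.le (.inr rfl), hterm hl (.inl rfl)]
  rintro e ⟨hel, hel'⟩
  by_cases he : e ∈ C
  · obtain ⟨p, hp, rfl⟩ := τ.exists_edge_eq he
    have hmem : τ.vtx (l + 1) ∉ G.ends (τ.edge p) := by
      rw [τ.mem_ends_edge_iff l.succ_pos hl hp]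
      rintro (rfl | hpl)
      · exact hel' rfl
      · exact hel (by rw [Nat.succ_injective hpl])
    rw [inc_apply, if_neg fun h => hmem h.1, zero_smul]
  · rw [Set.indicator_of_notMem he, smul_zero]

theorem apply_edge_eq_of_boundary_eq_zero {f : G.E → A} (hk : k ≤ n + 1)
    (hf : ∀ m, i < m → m < k → boundary (C.indicator f) (τ.vtx m) = 0) (hip : i ≤ p) (hpk : p < k) :
    f (τ.edge p) = f (τ.edge i) := by
  induction p, hip using Nat.le_induction with
  | base => rfl
  | succ p hip ih =>
    have hzero := hf (p + 1) (by omega) hpk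
    rw [τ.boundary_indicator_vtx_succ f (by omega), ← ZModModule.sub_eq_add, sub_eq_zero] at hzero
    rw [← hzero, ih (by omega)]

theorem saturatedAtDegreeTwo_arc (hk : k ≤ n) (hi : G.degree (τ.vtx i) ≠ 2)
    (hk2 : G.degree (τ.vtx k) ≠ 2) : SaturatedAtDegreeTwo (τ.arc i k) := by
  rintro v e e' hv ⟨p, hp, rfl⟩ hve hve'
  have hpn : p < n := hp.2.trans_le hk
  obtain ⟨l, hil, hlk, rfl⟩ : ∃ l, i < l ∧ l < k ∧ τ.vtx l = v := by
    rw [τ.ends_edge p hpn, Sym2.mem_iff] at hve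
    rcases hve with rfl | rfl
    · exact ⟨p, hp.1.lt_of_ne (by rintro rfl; exact hi hv), hp.2, rfl⟩
    · exact ⟨p + 1, Nat.lt_succ_of_le hp.1,
        (Nat.succ_le_of_lt hp.2).lt_of_ne (by rintro rfl; exact hk2 hv), rfl⟩
  obtain ⟨p', hp', rfl⟩ :=
    τ.exists_edge_eq (τ.isCycle.saturatedAtDegreeTwo hv (τ.edge_mem hpn.le) hve hve')
  rw [τ.mem_ends_edge_iff (by omega) (by omega) hp'] at hve'
  rw [τ.edge_mem_arc_iff (by omega) hp']
  omega

end Tour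

theorem Reaches.exists_injOn {S : Set G.E} {u w : G.V} (h : G.Reaches S u w) :
    ∃ (n : ℕ) (vtx : ℕ → G.V), vtx 0 = u ∧ vtx n = w ∧ Set.InjOn vtx (Set.Iic n) ∧
      ∀ k < n, ∃ e ∈ S, G.ends e = s(vtx k, vtx (k + 1)) := by
  let H : SimpleGraph G.V := SimpleGraph.fromRel fun a b => ∃ e ∈ S, G.ends e = s(a, b)
  have hreach : H.Reachable u w := by
    induction h with
    | refl => exact .refl _
    | @tail b d _ hbd ih =>
      rcases eq_or_ne b d with rfl | hne
      · exact ih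
      · exact ih.trans (SimpleGraph.Adj.reachable ⟨hne, .inl hbd⟩)
  obtain ⟨p, hp⟩ := hreach.exists_isPath
  refine ⟨p.length, p.getVert, p.getVert_zero, p.getVert_length, hp.getVert_injOn, fun k hk => ?_⟩
  obtain ⟨-, h | ⟨e, he, hends⟩⟩ := p.adj_getVert_succ hk
  · exact h
  · exact ⟨e, he, hends.trans Sym2.eq_swap⟩

theorem Reaches.mono {S T : Set G.E} {u w : G.V} (hST : S ⊆ T) (h : G.Reaches S u w) :
    G.Reaches T u w :=
  Relation.ReflTransGen.mono (fun _ _ ⟨e, he, hends⟩ => ⟨e, hST he, hends⟩) _ _ h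

theorem IsCycle.reaches_sdiff_singleton {S : Set G.E} {e : G.E} {u w : G.V} (hS : G.IsCycle S)
    (he : e ∈ S) (hends : G.ends e = s(u, w)) : G.Reaches (S \ {e}) u w := by
  rcases eq_or_ne u w with rfl | huw
  · exact .refl
  have hboundary : boundary ((S \ {e}).indicator (1 : G.E → ZMod 2)) =
      Pi.single u 1 + Pi.single w 1 := by
    rw [Set.indicator_sdiff (Set.singleton_subset_iff.2 he), map_sub,
      isCycle_iff_boundary_eq_zero.1 hS, ZModModule.sub_eq_add, zero_add, Set.indicator_singleton,
      Pi.one_apply, boundary_single hends]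
  obtain ⟨x, hxu, hx, hreach⟩ := exists_reaches_boundary_ne_zero (u := u)
    (f := (S \ {e}).indicator (1 : G.E → ZMod 2)) (by
      rw [hboundary, Pi.add_apply, Pi.single_eq_same, Pi.single_eq_of_ne huw, add_zero]
      exact one_ne_zero)
  obtain rfl : x = w := by
    by_contra hxw
    exact hx (by rw [hboundary, Pi.add_apply, Pi.single_eq_of_ne hxu, Pi.single_eq_of_ne hxw,
      add_zero])
  exact hreach.mono Set.support_indicator_subset

theorem IsCircuit.exists_tour {C : Set G.E} (hC : G.IsCircuit C) : ∃ n, Nonempty (G.Tour C n) := by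
  obtain ⟨e₀, he₀⟩ := hC.1
  obtain ⟨w, u, hends⟩ := exists_ends_eq e₀
  obtain ⟨n, vtx, rfl, rfl, hinj, hvtx⟩ :=
    (hC.isCycle.reaches_sdiff_singleton he₀ hends).symm.exists_injOn
  have hedge : ∀ k, ∃ e ∈ C, (k < n → e ≠ e₀ ∧ G.ends e = s(vtx k, vtx (k + 1))) ∧
      (n ≤ k → e = e₀) := fun k => by
    rcases lt_or_ge k n with hk | hk
    · obtain ⟨e, he, h⟩ := hvtx k hk
      exact ⟨e, he.1, fun _ => ⟨he.2, h⟩, fun h => absurd hk h.not_gt⟩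
    · exact ⟨e₀, he₀, fun h => absurd hk h.not_ge, fun _ => rfl⟩
  choose edge hmem hlt hge using hedge
  have edge_injOn : Set.InjOn edge (Set.Iic n) := by
    have ne_of_lt {k l} (hkl : k < l) (hl : l ≤ n) : edge k ≠ edge l := fun h => by
      obtain ⟨hne, hk⟩ := hlt k (by omega)
      rcases hl.lt_or_eq with hln | rfl
      · rw [h, (hlt l hln).2, Sym2.eq_iff] at hk
        rcases hk with ⟨hv, -⟩ | ⟨-, hv'⟩
        · exact absurd (hinj hl (hkl.le.trans hl) hv) hkl.ne'
        · exact absurd (hinj hln (hkl.le.trans hl) hv') (by omega)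
      · exact hne (h.trans (hge l le_rfl))
    intro k hk l hl h
    rcases lt_trichotomy k l with hkl | hkl | hkl
    · exact absurd h (ne_of_lt hkl hl)
    · exact hkl
    · exact absurd h.symm (ne_of_lt hkl hk)
  let τ : G.Tour (edge '' Set.Iic n) n :=
    ⟨vtx, edge, fun k hk => (hlt k hk).2, hge n le_rfl ▸ hends, hinj, edge_injOn, rfl⟩
  have himage : edge '' Set.Iic n = C := by
    refine hC.eq_of_isCycle_subset τ.isCycle ?_ ⟨_, τ.edge_mem le_rfl⟩
    exact Set.image_subset_iff.2 fun k _ => hmem k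
  exact ⟨n, ⟨himage ▸ τ⟩⟩

section Switching

/-- The symplectic form on `ZMod 2 × ZMod 2`, as a linear form in the second argument. -/
def symp (c : ZMod 2 × ZMod 2) : ZMod 2 × ZMod 2 →ₗ[ZMod 2] ZMod 2 :=
  c.1 • LinearMap.snd (ZMod 2) (ZMod 2) (ZMod 2) + c.2 • LinearMap.fst (ZMod 2) (ZMod 2) (ZMod 2)

theorem symp_apply (c x : ZMod 2 × ZMod 2) : symp c x = c.1 * x.2 + c.2 * x.1 := rfl

theorem symp_ne_zero_iff {c x : ZMod 2 × ZMod 2} (hc : c ≠ 0) :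
    symp c x ≠ 0 ↔ x ≠ 0 ∧ x ≠ c := by
  rw [symp_apply]
  revert c x
  decide

variable {C : Set G.E} {f g : G.E → ZMod 2 × ZMod 2} {c : ZMod 2 × ZMod 2}
  {P Q R : G.E → ZMod 2} {u w v : G.V}

/-- The flows which vanish nowhere outside `C`. -/
def Admissible (C : Set G.E) (f : G.E → ZMod 2 × ZMod 2) : Prop :=
  boundary f = 0 ∧ ∀ e ∉ C, f e ≠ 0

/-- The binary flows `Q` such that adding `c` to `f` on the support of `Q` creates no zero
outside `C`. -/
def Switchable (C : Set G.E) (f : G.E → ZMod 2 × ZMod 2) (c : ZMod 2 × ZMod 2)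
    (Q : G.E → ZMod 2) : Prop :=
  boundary Q = 0 ∧ ∀ e ∉ C, Q e ≠ 0 → symp c (f e) ≠ 0

/-- The function obtained from `f` by adding `c` on the support of `Q`. -/
def switch (f : G.E → ZMod 2 × ZMod 2) (c : ZMod 2 × ZMod 2) (Q : G.E → ZMod 2) :
    G.E → ZMod 2 × ZMod 2 :=
  f + fun e => Q e • c

theorem switch_apply (f : G.E → ZMod 2 × ZMod 2) (c : ZMod 2 × ZMod 2) (Q : G.E → ZMod 2)
    (e : G.E) : switch f c Q e = f e + Q e • c := rfl

theorem Switchable.add (hQ : Switchable C f c Q) (hR : Switchable C f c R) :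
    Switchable C f c (Q + R) := by
  refine ⟨by rw [map_add, hQ.1, hR.1, add_zero], fun e he hQR => ?_⟩
  by_cases hQe : Q e = 0
  · exact hR.2 e he (by rwa [Pi.add_apply, hQe, zero_add] at hQR)
  · exact hQ.2 e he hQe

theorem IsCycle.switchable (hC : G.IsCycle C) (f : G.E → ZMod 2 × ZMod 2)
    (c : ZMod 2 × ZMod 2) : Switchable C f c (C.indicator 1) :=
  ⟨isCycle_iff_boundary_eq_zero.1 hC,
    fun _ he hne => absurd (Set.indicator_of_notMem he _) hne⟩

theorem Admissible.switch (hf : Admissible C f) (hQ : Switchable C f c Q) :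
    Admissible C (switch f c Q) := by
  refine ⟨?_, fun e he => ?_⟩
  · ext1 v
    rw [Multigraph.switch, map_add, hf.1, Pi.add_apply, boundary_smul_const, hQ.1, Pi.zero_apply,
      Pi.zero_apply, zero_smul, add_zero]
  · have add_smul_ne_zero : ∀ (x c : ZMod 2 × ZMod 2) (y : ZMod 2),
        x ≠ 0 → (y ≠ 0 → c.1 * x.2 + c.2 * x.1 ≠ 0) → x + y • c ≠ 0 := by decide
    exact add_smul_ne_zero _ _ _ (hf.2 e he) (hQ.2 e he)

/-- The amount by which `f` fails to be conserved outside `C`; for a flow `f`, this is also its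
boundary on `C`. -/
noncomputable def defect (C : Set G.E) (f : G.E → ZMod 2 × ZMod 2) : G.V → ZMod 2 × ZMod 2 :=
  boundary (Cᶜ.indicator f)

theorem Admissible.defect_eq (hf : Admissible C f) : defect C f = boundary (C.indicator f) := by
  have hsum : boundary (C.indicator f) + defect C f = 0 := by
    rw [defect, ← map_add, Set.indicator_self_add_compl, hf.1]
  rwa [← ZModModule.sub_eq_add, sub_eq_zero, eq_comm] at hsum

/-- `u` and `w` are joined outside `C` by edges at which `f` takes neither of the values
`0` and `c`. -/
def Linked (C : Set G.E) (f : G.E → ZMod 2 × ZMod 2) (c : ZMod 2 × ZMod 2) (u w : G.V) : Prop :=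
  G.Reaches {e | e ∉ C ∧ symp c (f e) ≠ 0} u w

theorem exists_linked (hu : symp c (defect C f u) ≠ 0) :
    ∃ w, w ≠ u ∧ symp c (defect C f w) ≠ 0 ∧ Linked C f c u w := by
  simp only [defect, ← boundary_map] at hu ⊢
  obtain ⟨w, hwu, hw, hreach⟩ := exists_reaches_boundary_ne_zero hu
  refine ⟨w, hwu, hw, hreach.mono fun e he => ?_⟩
  have heC : e ∉ C := fun heC => Function.mem_support.1 he
    (by rw [Set.indicator_of_notMem (not_not_intro heC), map_zero])
  rw [Function.mem_support, Set.indicator_of_mem heC] at he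
  exact ⟨heC, he⟩

theorem Linked.exists_switchable (h : Linked C f c u w) (hPC : Function.support P ⊆ C)
    (hP : boundary P = Pi.single u 1 + Pi.single w 1) :
    ∃ Q, Switchable C f c Q ∧ ∀ e ∈ C, Q e = P e := by
  obtain ⟨L, hLS, hL⟩ := h.exists_boundary_eq
  refine ⟨P + L, ⟨by rw [map_add, hP, hL, ZModModule.add_self], fun e he hne => ?_⟩, fun e he => ?_⟩
  · rw [Pi.add_apply, Function.notMem_support.1 fun h => he (hPC h), zero_add] at hne
    exact (hLS hne).2
  · rw [Pi.add_apply, Function.notMem_support.1 fun h => (hLS h).1 he, add_zero]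

theorem defect_switch (f : G.E → ZMod 2 × ZMod 2) (c : ZMod 2 × ZMod 2) (Q : G.E → ZMod 2)
    (v : G.V) : defect C (switch f c Q) v = defect C f v + boundary (Cᶜ.indicator Q) v • c := by
  rw [defect, switch, Set.indicator_add', map_add, Pi.add_apply, ← boundary_smul_const, defect,
    Set.indicator_smul_const]

theorem Linked.exists_admissible (hf : Admissible C f) (h : Linked C f c u w)
    (hC : G.Reaches C u w) : ∃ g, Admissible C g ∧
      ∀ v, defect C g v = defect C f v + (Pi.single u 1 + Pi.single w 1 : G.V → ZMod 2) v • c := by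
  obtain ⟨P, hPC, hP⟩ := hC.exists_boundary_eq
  obtain ⟨Q, hQ, hQP⟩ := h.exists_switchable hPC hP
  refine ⟨switch f c Q, hf.switch hQ, fun v => ?_⟩
  have hsum := Set.indicator_self_add_compl C Q
  have hQC : C.indicator Q = P := by
    rw [Set.indicator_congr hQP, Set.indicator_eq_self.2 hPC]
  rw [defect_switch, ← hP, ← hQC]
  congr 2
  have hzero := hQ.1
  rw [← hsum, map_add, ← ZModModule.sub_eq_add, sub_eq_zero] at hzero
  rw [hzero]

end Switching

section Counting

variable {C : Set G.E} {f g : G.E → ZMod 2 × ZMod 2} {c t : ZMod 2 × ZMod 2}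
  {Q R : G.E → ZMod 2} {q : ℕ}

/-- The number of edges of `C` on which `f` takes the value `t`. -/
noncomputable def count (C : Set G.E) (f : G.E → ZMod 2 × ZMod 2) (t : ZMod 2 × ZMod 2) : ℕ :=
  {e ∈ C | f e = t}.ncard

theorem ncard_sep_eq_sum (C : Set G.E) (p : G.E → Prop) [DecidablePred p] :
    {e ∈ C | p e}.ncard = ∑ e ∈ C.toFinite.toFinset, if p e then 1 else 0 := by
  rw [Finset.sum_boole, Nat.cast_id, ← Set.ncard_coe_finset]
  congr 1
  ext e
  simp only [Finset.coe_filter, Set.Finite.mem_toFinset, Set.mem_ofPred_eq]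

theorem sum_count (C : Set G.E) (f : G.E → ZMod 2 × ZMod 2) : ∑ t, count C f t = C.ncard := by
  simp only [count, ncard_sep_eq_sum]
  rw [Finset.sum_comm, Set.ncard_eq_toFinset_card C, Finset.card_eq_sum_ones]
  simp only [Finset.sum_ite_eq, Finset.mem_univ, if_true]

theorem count_switch_indicator (C : Set G.E) (f : G.E → ZMod 2 × ZMod 2)
    (t : ZMod 2 × ZMod 2) : count C (switch f t (C.indicator 1)) 0 = count C f t := by
  refine congrArg Set.ncard (Set.ext fun e => and_congr_right fun he => ?_)
  rw [switch_apply, Set.indicator_of_mem he, Pi.one_apply, one_smul, ← ZModModule.sub_eq_add,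
    sub_eq_zero]

/-- On `C`, any two values of any two admissible functions occur about equally often.  This holds
in a counterexample to the theorem. -/
def Balanced (C : Set G.E) (q : ℕ) : Prop :=
  ∀ ⦃f g⦄, Admissible C f → Admissible C g → ∀ s t, count C f s < count C g t + q

theorem IsCycle.balanced (hC : G.IsCycle C)
    (h : ∀ g, Admissible C g → C.ncard < 4 * count C g 0 + q) : Balanced C q := by
  have hlt : ∀ g, Admissible C g → ∀ t, C.ncard < 4 * count C g t + q := fun g hg t =>
    count_switch_indicator C g t ▸ h _ (hg.switch (hC.switchable g t))
  intro f g hf hg s t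
  have hothers : 3 * (C.ncard + 1) ≤ 4 * ∑ r ∈ Finset.univ.erase s, count C f r + 3 * q := by
    have hsum := Finset.sum_le_sum fun r (_ : r ∈ Finset.univ.erase s) =>
      Nat.succ_le_of_lt (hlt f hf r)
    have hcard : (Finset.univ.erase s).card = 3 := Finset.card_erase_of_mem (Finset.mem_univ s)
    rwa [Finset.sum_add_distrib, ← Finset.mul_sum, Finset.sum_const, Finset.sum_const, hcard]
      at hsum
  have htotal := Finset.add_sum_erase _ (count C f) (Finset.mem_univ s)
  rw [sum_count] at htotal
  have := hlt g hg t
  omega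

/-- Switching along `Q` turns the difference of the counts of `f` and `switch f c R` into that
of `switch f c Q` and `switch f c (Q + R)`, except on the common support of `Q` and `R`. -/
theorem Balanced.ncard_inter_lt (hbal : Balanced C q) (hf : Admissible C f)
    (hQ : Switchable C f c Q) (hR : Switchable C f c R) (t : ZMod 2 × ZMod 2) :
    {e ∈ C | Q e ≠ 0 ∧ R e ≠ 0 ∧ f e = t}.ncard <
      {e ∈ C | Q e ≠ 0 ∧ R e ≠ 0 ∧ f e = t + c}.ncard + q := by
  have hedge : ∀ (x c t : ZMod 2 × ZMod 2) (y z : ZMod 2),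
      (if x = t then 1 else 0) + (if x + y • c = t + c then 1 else 0) +
          2 * (if y ≠ 0 ∧ z ≠ 0 ∧ x = t + c then 1 else 0) =
        (if x + z • c = t then 1 else 0) + (if x + (y + z) • c = t + c then 1 else 0) +
          2 * (if y ≠ 0 ∧ z ≠ 0 ∧ x = t then 1 else 0) := by decide
  have hcount : count C f t + count C (switch f c Q) (t + c) +
        2 * {e ∈ C | Q e ≠ 0 ∧ R e ≠ 0 ∧ f e = t + c}.ncard =
      count C (switch f c R) t + count C (switch f c (Q + R)) (t + c) +
        2 * {e ∈ C | Q e ≠ 0 ∧ R e ≠ 0 ∧ f e = t}.ncard := by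
    simp only [count, ncard_sep_eq_sum, Finset.mul_sum, ← Finset.sum_add_distrib]
    exact Finset.sum_congr rfl fun e _ => hedge (f e) c t (Q e) (R e)
  have hlt := hbal hf (hf.switch hR) t t
  have hlt' := hbal (hf.switch hQ) (hf.switch (hQ.add hR)) (t + c) (t + c)
  omega

theorem Balanced.ncard_inter_lt_of_eq (hbal : Balanced C q) (hf : Admissible C f) (hc : c ≠ 0)
    (hQ : Switchable C f c Q) (hR : Switchable C f c R)
    (ht : ∀ e ∈ C, Q e ≠ 0 → R e ≠ 0 → f e = t) :
    {e ∈ C | Q e ≠ 0 ∧ R e ≠ 0}.ncard < q := by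
  have hlt := hbal.ncard_inter_lt hf hQ hR t
  have hempty : {e ∈ C | Q e ≠ 0 ∧ R e ≠ 0 ∧ f e = t + c} = ∅ := by
    refine Set.eq_empty_of_forall_notMem fun e ⟨he, hQe, hRe, hfe⟩ => hc ?_
    rwa [ht e he hQe hRe, left_eq_add] at hfe
  rw [hempty, Set.ncard_empty, zero_add] at hlt
  have hsub : {e ∈ C | Q e ≠ 0 ∧ R e ≠ 0} ⊆ {e ∈ C | Q e ≠ 0 ∧ R e ≠ 0 ∧ f e = t} :=
    fun e ⟨he, hQe, hRe⟩ => ⟨he, hQe, hRe, ht e he hQe hRe⟩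
  exact (Set.ncard_le_ncard hsub).trans_lt hlt

end Counting

section Threads

variable {C S : Set G.E} {f : G.E → ZMod 2 × ZMod 2} {n m q : ℕ}

theorem IsDeg2Path.le_ncard {W : G.Walk m} (hW : G.IsDeg2Path W) (hS : SaturatedAtDegreeTwo S)
    {e : G.E} (he : e ∈ S) (heW : e ∈ Set.range W.edge) : m ≤ S.ncard := by
  have hstep : ∀ k (hk : k + 1 < m),
      (W.edge ⟨k, k.lt_succ_self.trans hk⟩ ∈ S ↔ W.edge ⟨k + 1, hk⟩ ∈ S) := fun k hk => by
    have hdeg := hW.2.2 ⟨k + 1, by omega⟩ k.succ_pos hk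
    have hmem : W.vtx ⟨k + 1, by omega⟩ ∈ G.ends (W.edge ⟨k, by omega⟩) :=
      W.compat ⟨k, by omega⟩ ▸ Sym2.mem_mk_right _ _
    have hmem' : W.vtx ⟨k + 1, by omega⟩ ∈ G.ends (W.edge ⟨k + 1, hk⟩) :=
      W.compat ⟨k + 1, hk⟩ ▸ Sym2.mem_mk_left _ _
    exact ⟨fun h => hS hdeg h hmem hmem', fun h => hS hdeg h hmem' hmem⟩
  have hzero : ∀ k (hk : k < m), (W.edge ⟨0, by omega⟩ ∈ S ↔ W.edge ⟨k, hk⟩ ∈ S) := fun k => by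
    induction k with
    | zero => exact fun _ => Iff.rfl
    | succ k ih => exact fun hk => (ih (by omega)).trans (hstep k hk)
  obtain ⟨i, rfl⟩ := heW
  have hrange : Set.range W.edge ⊆ S := by
    rintro _ ⟨j, rfl⟩
    exact (hzero j j.2).1 ((hzero i i.2).2 he)
  calc m = (Set.range W.edge).ncard := by
        rw [Set.ncard_range_of_injective hW.2.1.2, Nat.card_fin]
    _ ≤ S.ncard := Set.ncard_le_ncard hrange

/-- Every edge of `C` lies on a path of length at least `q` whose internal vertices have degree
two. -/
def CoveredByDeg2Paths (C : Set G.E) (q : ℕ) : Prop :=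
  ∀ e ∈ C, ∃ m, q ≤ m ∧ ∃ W : G.Walk m, G.IsDeg2Path W ∧ e ∈ Set.range W.edge

theorem CoveredByDeg2Paths.le_ncard (hC : CoveredByDeg2Paths C q) (hS : SaturatedAtDegreeTwo S)
    (hne : (C ∩ S).Nonempty) : q ≤ S.ncard := by
  obtain ⟨e, heC, heS⟩ := hne
  obtain ⟨m, hqm, W, hW, heW⟩ := hC e heC
  exact hqm.trans (hW.le_ncard hS heS heW)

theorem Admissible.degree_ne_two (hC : G.IsCycle C) (hf : Admissible C f) {v : G.V}
    (hv : defect C f v ≠ 0) : G.degree v ≠ 2 := fun hdeg => by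
  obtain ⟨e, he, hve⟩ := exists_mem_ends_of_boundary_ne_zero hv
  rw [hf.defect_eq] at hv
  obtain ⟨e', he', hve'⟩ := exists_mem_ends_of_boundary_ne_zero hv
  exact Set.mem_of_indicator_ne_zero he
    (hC.saturatedAtDegreeTwo hdeg (Set.mem_of_indicator_ne_zero he') hve' hve)

theorem Tour.add_le_of_defect_ne_zero (τ : G.Tour C n) (hC : CoveredByDeg2Paths C q)
    (hf : Admissible C f) {i k : ℕ} (hik : i < k) (hkn : k ≤ n)
    (hi : defect C f (τ.vtx i) ≠ 0) (hk : defect C f (τ.vtx k) ≠ 0) : i + q ≤ k := by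
  have hsat : SaturatedAtDegreeTwo (τ.arc i k) :=
    τ.saturatedAtDegreeTwo_arc hkn (hf.degree_ne_two τ.isCycle hi) (hf.degree_ne_two τ.isCycle hk)
  have hmem : τ.edge i ∈ τ.arc i k := Set.mem_image_of_mem _ (Set.left_mem_Ico.2 hik)
  have hq := hC.le_ncard hsat ⟨_, τ.edge_mem (by omega), hmem⟩
  rw [τ.ncard_arc (by omega)] at hq
  omega

end Threads

namespace Tour

variable {C : Set G.E} {f : G.E → ZMod 2 × ZMod 2} {a c : ZMod 2 × ZMod 2}
  {Q R : G.E → ZMod 2} {n b i j k q : ℕ} (τ : G.Tour C n)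

theorem exists_linked_vtx (hf : Admissible C f) (hi : symp c (defect C f (τ.vtx i)) ≠ 0) :
    ∃ l ≤ n, l ≠ i ∧ symp c (defect C f (τ.vtx l)) ≠ 0 ∧
      Linked C f c (τ.vtx i) (τ.vtx l) := by
  obtain ⟨w, hwi, hw, hlink⟩ := exists_linked hi
  have hne : boundary (C.indicator f) w ≠ 0 := fun h =>
    hw (by rw [hf.defect_eq, h, map_zero])
  obtain ⟨e, he, hwe⟩ := exists_mem_ends_of_boundary_ne_zero hne
  obtain ⟨l, hl, rfl⟩ := τ.exists_vtx_eq (Set.mem_of_indicator_ne_zero he) hwe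
  exact ⟨l, hl, fun h => hwi (congrArg _ h), hw, hlink⟩

theorem exists_switchable (hij : i ≤ j) (hj : j ≤ n) (h : Linked C f c (τ.vtx i) (τ.vtx j)) :
    ∃ Q, Switchable C f c Q ∧ ∀ p ≤ n, Q (τ.edge p) = if i ≤ p ∧ p < j then 1 else 0 := by
  obtain ⟨Q, hQ, hQP⟩ := h.exists_switchable
    (Set.support_indicator_subset.trans (τ.arc_subset (by omega))) (τ.boundary_arc hij hj)
  refine ⟨Q, hQ, fun p hp => ?_⟩
  classical
  rw [hQP _ (τ.edge_mem hp), Set.indicator_apply]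
  exact if_congr (τ.edge_mem_arc_iff (by omega) hp) rfl rfl

theorem lt_add_of_switchable (hbal : Balanced C q) (hf : Admissible C f) (hc : c ≠ 0)
    (hk : k ≤ n + 1) (hzero : ∀ m, i < m → m < k → defect C f (τ.vtx m) = 0)
    (hQ : Switchable C f c Q) (hR : Switchable C f c R)
    (hQR : ∀ p ≤ n, Q (τ.edge p) ≠ 0 ∧ R (τ.edge p) ≠ 0 ↔ i ≤ p ∧ p < k) : k < i + q := by
  have hinter : {e ∈ C | Q e ≠ 0 ∧ R e ≠ 0} = τ.arc i k := by
    ext e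
    constructor
    · rintro ⟨he, hne⟩
      obtain ⟨p, hp, rfl⟩ := τ.exists_edge_eq he
      exact Set.mem_image_of_mem _ ((hQR p hp).1 hne)
    · rintro ⟨p, hp, rfl⟩
      have hpn : p ≤ n := Nat.lt_succ_iff.1 (hp.2.trans_le hk)
      exact ⟨τ.edge_mem hpn, (hQR p hpn).2 hp⟩
  have hconst : ∀ e ∈ C, Q e ≠ 0 → R e ≠ 0 → f e = f (τ.edge i) := fun e he hQe hRe => by
    obtain ⟨p, hp, rfl⟩ := τ.exists_edge_eq he
    obtain ⟨hip, hpk⟩ := (hQR p hp).1 ⟨hQe, hRe⟩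
    exact τ.apply_edge_eq_of_boundary_eq_zero hk (hf.defect_eq ▸ hzero) hip hpk
  have hlt := hbal.ncard_inter_lt_of_eq hf hc hQ hR hconst
  rw [hinter, τ.ncard_arc hk] at hlt
  omega

theorem lt_add_of_linked (hbal : Balanced C q) (hf : Admissible C f) (hc : c ≠ 0) (hij : i ≤ j)
    (hj : j ≤ n) (hlink : Linked C f c (τ.vtx i) (τ.vtx j)) (hkj : k ≤ j)
    (hzero : ∀ m, i < m → m < k → defect C f (τ.vtx m) = 0) (hR : Switchable C f c R)
    (hRk : ∀ p ≤ n, i ≤ p → p < j → (R (τ.edge p) ≠ 0 ↔ p < k)) : k < i + q := by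
  obtain ⟨Q, hQ, hQarc⟩ := τ.exists_switchable hij hj hlink
  refine τ.lt_add_of_switchable hbal hf hc (by omega) hzero hQ hR fun p hp => ?_
  have := hRk p hp
  rw [hQarc p hp]
  grind

/-- Let `k` be the first index after `i` at which the defect is nonzero.  The link between `vtx i`
and `vtx j`, or else the link from `vtx k`, gives a switchable function which on the arc from `i`
to `j` is supported on the arc from `i` to `k`; this arc is too long for that.  Otherwise the link
from `vtx k` ends between `k` and `j`, and the pair `i, j` can be replaced by a closer one. -/
theorem not_linked (hbal : Balanced C q) (hcov : CoveredByDeg2Paths C q) (hf : Admissible C f)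
    (hc : c ≠ 0) (hb : b ≤ n + 1) (hbc : ∀ k < b, defect C f (τ.vtx k) ≠ c) (hij : i < j)
    (hjb : j < b) (hi : defect C f (τ.vtx i) ≠ 0) (hj : defect C f (τ.vtx j) ≠ 0) :
    ¬ Linked C f c (τ.vtx i) (τ.vtx j) := by
  induction hd : j - i using Nat.strong_induction_on generalizing i j with
  | _ d ih =>
  intro hlink
  have hex : ∃ k, i < k ∧ defect C f (τ.vtx k) ≠ 0 := ⟨j, hij, hj⟩
  obtain ⟨k, ⟨hik, hk⟩, hmin⟩ : ∃ k, (i < k ∧ defect C f (τ.vtx k) ≠ 0) ∧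
      ∀ m < k, ¬ (i < m ∧ defect C f (τ.vtx m) ≠ 0) :=
    ⟨Nat.find hex, Nat.find_spec hex, fun _ => Nat.find_min hex⟩
  have hzero : ∀ m, i < m → m < k → defect C f (τ.vtx m) = 0 := fun m him hmk =>
    of_not_not fun h => hmin m hmk ⟨him, h⟩
  have hkj : k ≤ j := not_lt.1 fun hjk => hmin j hjk ⟨hij, hj⟩
  have hgap := τ.add_le_of_defect_ne_zero hcov hf hik (by omega) hi hk
  have hfalse {R} (hR : Switchable C f c R)
      (hRk : ∀ p ≤ n, i ≤ p → p < j → (R (τ.edge p) ≠ 0 ↔ p < k)) : False :=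
    hgap.not_gt (τ.lt_add_of_linked hbal hf hc hij.le (by omega) hlink hkj hzero hR hRk)
  rcases hkj.eq_or_lt with rfl | hkj
  · obtain ⟨Q, hQ, hQarc⟩ := τ.exists_switchable hij.le (by omega) hlink
    exact hfalse hQ fun p hp _ _ => by rw [hQarc p hp]; grind
  obtain ⟨l, hln, hlk, hl, hkl⟩ :=
    τ.exists_linked_vtx hf ((symp_ne_zero_iff hc).2 ⟨hk, hbc k (by omega)⟩)
  have hl0 : defect C f (τ.vtx l) ≠ 0 := ((symp_ne_zero_iff hc).1 hl).1
  rcases hlk.lt_or_gt with hlk | hlk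
  · have hli : l ≤ i := not_lt.1 fun hil => hl0 (hzero l hil hlk)
    obtain ⟨R, hR, hRarc⟩ := τ.exists_switchable hlk.le (by omega) (Reaches.symm hkl)
    exact hfalse hR fun p hp _ _ => by rw [hRarc p hp]; grind
  rcases le_or_gt l j with hlj | hjl
  · exact ih (l - k) (by omega) hlk (by omega) hk hl0 rfl hkl
  · obtain ⟨R, hR, hRarc⟩ := τ.exists_switchable hlk.le hln hkl
    refine hfalse (hR.add (τ.isCycle.switchable f c)) fun p hp _ _ => ?_
    rw [Pi.add_apply, hRarc p hp, Set.indicator_of_mem (τ.edge_mem hp), Pi.one_apply]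
    have := ZModModule.add_self (1 : ZMod 2)
    grind

theorem reaches (τ : G.Tour C n) (hi : i ≤ n) (hj : j ≤ n) :
    G.Reaches C (τ.vtx i) (τ.vtx j) := by
  have hzero : ∀ l ≤ n, G.Reaches C (τ.vtx 0) (τ.vtx l) := fun l hl => by
    induction l with
    | zero => exact .refl
    | succ l ih => exact (ih (by omega)).tail ⟨_, τ.edge_mem (by omega), τ.ends_edge l hl⟩
  exact (hzero i hi).symm.trans (hzero j hj)

/-- A defect `y` at `vtx b` other than `0` and `a` is turned into `a` by adding `c = a + y` along a
link, which by `not_linked` leads to a vertex beyond `b`. -/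
theorem exists_admissible_defect_succ (hbal : Balanced C q) (hcov : CoveredByDeg2Paths C q)
    (hf : Admissible C f) (ha : a ≠ 0) (hb : b ≤ n)
    (hdef : ∀ k < b, defect C f (τ.vtx k) = 0 ∨ defect C f (τ.vtx k) = a) :
    ∃ g, Admissible C g ∧ ∀ k < b + 1, defect C g (τ.vtx k) = 0 ∨ defect C g (τ.vtx k) = a := by
  by_cases hy : defect C f (τ.vtx b) = 0 ∨ defect C f (τ.vtx b) = a
  · exact ⟨f, hf, fun k hk => (Nat.lt_succ_iff_lt_or_eq.1 hk).elim (hdef k) (· ▸ hy)⟩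
  push Not at hy
  set y := defect C f (τ.vtx b) with hydef
  have hc : a + y ≠ 0 := by rw [← ZModModule.sub_eq_add]; exact sub_ne_zero.2 hy.2.symm
  have hyc : y ≠ a + y := fun h => ha (right_eq_add.1 h)
  have hbc : ∀ k < b + 1, defect C f (τ.vtx k) ≠ a + y := fun k hk => by
    rcases Nat.lt_succ_iff_lt_or_eq.1 hk with hk | rfl
    · rcases hdef k hk with h | h
      · exact h ▸ hc.symm
      · exact h ▸ fun h => hy.1 (left_eq_add.1 h)
    · exact hyc
  obtain ⟨l, hl, hlb, hlodd, hlink⟩ :=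
    τ.exists_linked_vtx hf ((symp_ne_zero_iff hc).2 ⟨hy.1, hyc⟩)
  have hbl : b < l := hlb.lt_or_gt.resolve_left fun hlt =>
    τ.not_linked hbal hcov hf hc (by omega) hbc hlt b.lt_succ_self
      ((symp_ne_zero_iff hc).1 hlodd).1 hy.1 (Reaches.symm hlink)
  obtain ⟨g, hg, hgdef⟩ := hlink.exists_admissible hf (τ.reaches hb hl)
  refine ⟨g, hg, fun k hk => ?_⟩
  have vtx_ne {m : ℕ} (hm : m ≤ n) (hkm : k ≠ m) : τ.vtx k ≠ τ.vtx m := fun h =>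
    hkm (τ.vtx_injOn (Set.mem_Iic.2 (by omega)) hm h)
  rw [hgdef, Pi.add_apply, Pi.single_eq_of_ne (vtx_ne hl (by omega)), add_zero]
  rcases Nat.lt_succ_iff_lt_or_eq.1 hk with hk | rfl
  · rw [Pi.single_eq_of_ne (vtx_ne hb hk.ne), zero_smul, add_zero]
    exact hdef k hk
  · right
    rw [Pi.single_eq_same, one_smul, ← hydef, add_comm a, ← add_assoc, ZModModule.add_self,
      zero_add]

theorem exists_admissible_defect (τ : G.Tour C n) (hbal : Balanced C q)
    (hcov : CoveredByDeg2Paths C q) (hf : Admissible C f) (ha : a ≠ 0) : ∃ g, Admissible C g ∧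
      ∀ k < n + 1, defect C g (τ.vtx k) = 0 ∨ defect C g (τ.vtx k) = a := by
  suffices h : ∀ b ≤ n + 1, ∃ g, Admissible C g ∧
      ∀ k < b, defect C g (τ.vtx k) = 0 ∨ defect C g (τ.vtx k) = a from h _ le_rfl
  intro b hb
  induction b with
  | zero => exact ⟨f, hf, fun k hk => absurd hk k.not_lt_zero⟩
  | succ b ih =>
    obtain ⟨g, hg, hdef⟩ := ih (by omega)
    exact τ.exists_admissible_defect_succ hbal hcov hg ha (by omega) hdef

theorem defect_eq_zero (hbal : Balanced C q) (hcov : CoveredByDeg2Paths C q)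
    (hf : Admissible C f) (hc : c ≠ 0) (hac : a ≠ c)
    (hdef : ∀ k < n + 1, defect C f (τ.vtx k) = 0 ∨ defect C f (τ.vtx k) = a) (hi : i ≤ n) :
    defect C f (τ.vtx i) = 0 := by
  by_contra hi0
  have hne : ∀ k < n + 1, defect C f (τ.vtx k) ≠ c := fun k hk => by
    rcases hdef k hk with h | h
    · exact h ▸ hc.symm
    · exact h ▸ hac
  obtain ⟨l, hl, hli, hlodd, hlink⟩ :=
    τ.exists_linked_vtx hf ((symp_ne_zero_iff hc).2 ⟨hi0, hne i (by omega)⟩)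
  have hl0 := ((symp_ne_zero_iff hc).1 hlodd).1
  rcases hli.lt_or_gt with hli | hil
  · exact τ.not_linked hbal hcov hf hc le_rfl hne hli (by omega) hl0 hi0 (Reaches.symm hlink)
  · exact τ.not_linked hbal hcov hf hc le_rfl hne hil (by omega) hi0 hl0 hlink

theorem not_balanced (τ : G.Tour C n) (hcov : CoveredByDeg2Paths C q) (hf : Admissible C f) :
    ¬ Balanced C q := fun hbal => by
  obtain ⟨g, hg, hdef⟩ := τ.exists_admissible_defect (a := (1, 0)) hbal hcov hf (by decide)
  have hzero {i} (hi : i ≤ n) : defect C g (τ.vtx i) = 0 :=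
    τ.defect_eq_zero (c := (0, 1)) hbal hcov hg (by decide) (by decide) hdef hi
  have hconst : ∀ e ∈ C, g e = g (τ.edge 0) := fun e he => by
    obtain ⟨p, hp, rfl⟩ := τ.exists_edge_eq he
    exact τ.apply_edge_eq_of_boundary_eq_zero le_rfl
      (fun m _ hm => hg.defect_eq ▸ hzero (Nat.lt_succ_iff.1 hm)) p.zero_le (by omega)
  have hall : count C g (g (τ.edge 0)) = C.ncard := by
    rw [count, Set.sep_eq_self_iff_mem_true.2 hconst]
  have hnone : count C g (g (τ.edge 0) + (1, 0)) = 0 := by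
    rw [count, Set.ncard_eq_zero, Set.sep_eq_empty_iff_mem_false]
    intro e he h
    rw [hconst e he, left_eq_add] at h
    exact absurd h (by decide)
  have hq := hcov.le_ncard τ.isCycle.saturatedAtDegreeTwo ⟨_, τ.edge_mem le_rfl, τ.edge_mem le_rfl⟩
  have hlt := hbal hg hg (g (τ.edge 0)) (g (τ.edge 0) + (1, 0))
  omega

end Tour

end Multigraph

open Multigraph in
/-- If `C` is a circuit of `G` each of whose edges lies on a
thread of `G` of length at least `q`, and `G/C` admits a nowhere-zero
`ℤ₂×ℤ₂`-flow, then `G` admits a `ℤ₂×ℤ₂`-flow `f` with `E(G) − E(C) ⊆ supp f`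
and `|E_{f=(0,0)}(C)| ≤ (|E(C)| − q)/4`. -/
theorem circuit_contract_flow_thread (G : Multigraph) (C : Set G.E) (q : ℕ)
    (hC : G.IsCircuit C)
    (hthread : ∀ e ∈ C, ∃ n : ℕ, q ≤ n ∧ ∃ W : G.Walk n,
      G.IsThread W ∧ e ∈ Set.range W.edge)
    (hnz : ∃ f' : (G.contract C).E → ZMod 2 × ZMod 2,
      (G.contract C).IsFlow f' ∧ ∀ e, f' e ≠ (0, 0)) :
    ∃ f : G.E → ZMod 2 × ZMod 2, G.IsFlow f ∧
      (∀ e : G.E, e ∉ C → f e ≠ (0, 0)) ∧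
      ({e ∈ C | f e = (0, 0)}.ncard : ℝ) ≤ (1 / 4) * ((C.ncard : ℝ) - (q : ℝ)) := by
  obtain ⟨n, ⟨τ⟩⟩ := hC.exists_tour
  have hcov : CoveredByDeg2Paths C q := fun e he => by
    obtain ⟨m, hqm, W, hW, heW⟩ := hthread e he
    exact ⟨m, hqm, W, hW.1, heW⟩
  obtain ⟨f', hf', hf'0⟩ := hnz
  obtain ⟨f, hf, hff'⟩ := hf'.exists_lift
  have hadm : Admissible C f :=
    ⟨isFlow_iff_boundary_eq_zero.1 hf, fun e he => hff' ⟨e, he⟩ ▸ hf'0 ⟨e, he⟩⟩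
  obtain ⟨g, hg, hcount⟩ : ∃ g, Admissible C g ∧ 4 * count C g 0 + q ≤ C.ncard := by
    by_contra! h
    exact τ.not_balanced hcov hadm (hC.isCycle.balanced h)
  refine ⟨g, isFlow_iff_boundary_eq_zero.2 hg.1, hg.2, ?_⟩
  have hreal : 4 * ({e ∈ C | g e = (0, 0)}.ncard : ℝ) + q ≤ C.ncard := mod_cast hcount
  linarith
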